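/- arXiv:2603.05203 — 6 statements merged into one kernel-verified Lean document; each statement's English description precedes it below -/
import Mathlib

section
/- Let G be a finite connected simple graph with vertex set V, and let S, T ⊆ V be subsets with |S| = |T| = n. Then there exist bijective enumerations s₁, …, sₙ of S and t₁, …, tₙ of T, and for each i ∈ {1, …, n} a walk Wᵢ in G from sᵢ to tᵢ, such that for every i: (a) no vertex of Wᵢ other than its first vertex sᵢ belongs to {s_{i+1}, …, sₙ}, and (b) no vertex of Wᵢ belongs to {t₁, …, t_{i−1}}. (Hence sliding unlabeled tokens one at a time, in the order i = 1, …, n, along the walks Wᵢ is collision-free — at step i the occupied vertices are exactly {s_{i+1}, …, sₙ} ∪ {t₁, …, t_{i−1}} — and each token moves exactly once.) -/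
/-!
Fix a root `r` and let `v` be a vertex of `S ∪ T` farthest from `r`. Reversing time exchanges `S`
and `T`, so suppose `v ∈ T`. On a walk from `S` to `v` the last vertex in `S` holds a token which
can slide to `v` first. Thereafter `v` is blocked, but it obstructs nothing: the other tokens and
targets are no farther from `r` than `v` is, so geodesics from them to `r` avoid `v`, and the
induction continues with `r` unchanged.
-/

open Set

section Reachability

variable {V : Type*} {G : SimpleGraph V} {R R' S : Set V} {u v w r : V}

/-- `ReachableWithin G R u v` means that some walk of `G` from `u` to `v` has all its vertices,
including both ends, in `R`. This avoids passing to the subtype on which the induced graph of `R`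
lives. -/
def ReachableWithin (G : SimpleGraph V) (R : Set V) (u v : V) : Prop :=
  ∃ W : G.Walk u v, ∀ x ∈ W.support, x ∈ R

namespace ReachableWithin

theorem mono (hR : R ⊆ R') (h : ReachableWithin G R u v) : ReachableWithin G R' u v :=
  let ⟨W, hW⟩ := h
  ⟨W, fun x hx ↦ hR (hW x hx)⟩

theorem symm (h : ReachableWithin G R u v) : ReachableWithin G R v u :=
  let ⟨W, hW⟩ := h
  ⟨W.reverse, by simpa using hW⟩

theorem trans (huv : ReachableWithin G R u v) (hvw : ReachableWithin G R v w) :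
    ReachableWithin G R u w := by
  obtain ⟨W, hW⟩ := huv
  obtain ⟨W', hW'⟩ := hvw
  refine ⟨W.append W', fun x hx ↦ ?_⟩
  exact ((W.mem_support_append_iff W').1 hx).elim (hW x) (hW' x)

theorem right_mem (h : ReachableWithin G R u v) : v ∈ R :=
  let ⟨W, hW⟩ := h
  hW v W.end_mem_support

theorem exists_last_mem (h : ReachableWithin G R u v) (hu : u ∈ S) :
    ∃ a ∈ S, ReachableWithin G (R \ (S \ {a})) a v := by
  classical
  obtain ⟨W, hW⟩ := h.symm
  obtain ⟨a, haS, haW, hfirst⟩ := W.exists_mem_support_forall_mem_support_imp_eq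
    {x ∈ W.support.toFinset | x ∈ S} ⟨u, by simp [hu]⟩
  have hsub := W.support_takeUntil_subset_support haW
  refine ⟨a, (Finset.mem_filter.1 haS).2, symm ⟨W.takeUntil a haW, fun x hx ↦ ?_⟩⟩
  refine ⟨hW x (hsub hx), fun ⟨hxS, hxa⟩ ↦ hxa (hfirst x ?_ hx)⟩
  exact Finset.mem_filter.2 ⟨List.mem_toFinset.2 (hsub hx), hxS⟩

end ReachableWithin

/-- The vertices of `A` together with all vertices strictly closer to `r` than some vertex of `A`.
It contains every geodesic from `A` to `r`. Vertices not reachable from `r` have `G.dist` equal to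
`0`, so they may belong to it as well. -/
def geodesicRegion (G : SimpleGraph V) (r : V) (A : Set V) : Set V :=
  A ∪ {x | ∃ y ∈ A, G.dist x r < G.dist y r}

variable {A B : Set V}

theorem geodesicRegion_mono (h : A ⊆ B) : geodesicRegion G r A ⊆ geodesicRegion G r B :=
  union_subset_union h fun _ ⟨y, hy, hxy⟩ ↦ ⟨y, h hy, hxy⟩

theorem geodesicRegion_subset_sdiff_singleton (hAB : A ⊆ B) (hv : v ∉ A)
    (hfar : ∀ y ∈ B, G.dist y r ≤ G.dist v r) :
    geodesicRegion G r A ⊆ geodesicRegion G r B \ {v} := by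
  refine subset_sdiff_singleton (geodesicRegion_mono hAB) ?_
  rintro (hvA | ⟨y, hy, hvy⟩)
  · exact hv hvA
  · exact (hfar y (hAB hy)).not_gt hvy

theorem reachableWithin_geodesicRegion_root (hu : u ∈ A) (hr : G.Reachable u r) :
    ReachableWithin G (geodesicRegion G r A) u r := by
  classical
  obtain ⟨W, hW⟩ := hr.exists_walk_length_eq_dist
  refine ⟨W, fun x hx ↦ ?_⟩
  rcases eq_or_ne x u with rfl | hxu
  · exact .inl hu
  · refine .inr ⟨u, hu, ?_⟩
    calc G.dist x r ≤ (W.dropUntil x hx).length := SimpleGraph.dist_le _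
      _ < W.length := W.length_dropUntil_lt_length hx hxu
      _ = G.dist u r := hW

theorem reachableWithin_geodesicRegion (hA : ∀ x ∈ A, G.Reachable x r) (hu : u ∈ A) (hv : v ∈ A) :
    ReachableWithin G (geodesicRegion G r A) u v :=
  (reachableWithin_geodesicRegion_root hu (hA u hu)).trans
    (reachableWithin_geodesicRegion_root hv (hA v hv)).symm

end Reachability

section Schedule

variable {V : Type*} {G : SimpleGraph V} {R R' S T : Set V} {n : ℕ} {s t : Fin n → V} {a b : V}

/-- The enumerations `s` of `S` and `t` of `T` form a schedule in the region `R` if, for each `i` in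
turn, the token at `s i` can slide to `t i` inside `R` past the tokens that have not yet moved, at
`s j` for `i < j`, and those that have already arrived, at `t j` for `j < i`. -/
structure IsSchedule (G : SimpleGraph V) (R S T : Set V) (s t : Fin n → V) : Prop where
  source_injective : Function.Injective s
  target_injective : Function.Injective t
  range_source : range s = S
  range_target : range t = T
  reachableWithin (i : Fin n) : ReachableWithin G (R \ (s '' Ioi i ∪ t '' Iio i)) (s i) (t i)

namespace IsSchedule

theorem mono (hR : R ⊆ R') (h : IsSchedule G R S T s t) : IsSchedule G R' S T s t :=
  { h with reachableWithin := fun i ↦ (h.reachableWithin i).mono (sdiff_subset_sdiff_left hR) }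

theorem reverse (h : IsSchedule G R S T s t) :
    IsSchedule G R T S (t ∘ Fin.rev) (s ∘ Fin.rev) where
  source_injective := h.target_injective.comp Fin.rev_injective
  target_injective := h.source_injective.comp Fin.rev_injective
  range_source := by rw [Fin.rev_surjective.range_comp, h.range_target]
  range_target := by rw [Fin.rev_surjective.range_comp, h.range_source]
  reachableWithin i := by
    rw [image_comp, image_comp, Fin.image_rev, Fin.image_rev, Fin.preimage_rev_Ioi,
      Fin.preimage_rev_Iio, union_comm]
    exact (h.reachableWithin i.rev).symm

theorem cons (ha : a ∉ S) (hb : b ∉ T) (hab : ReachableWithin G (R \ S) a b)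
    (h : IsSchedule G (R \ {b}) S T s t) :
    IsSchedule G R (insert a S) (insert b T) (Fin.cons a s) (Fin.cons b t) where
  source_injective := Fin.cons_injective_iff.2 ⟨h.range_source ▸ ha, h.source_injective⟩
  target_injective := Fin.cons_injective_iff.2 ⟨h.range_target ▸ hb, h.target_injective⟩
  range_source := by rw [Fin.range_cons, h.range_source]
  range_target := by rw [Fin.range_cons, h.range_target]
  reachableWithin i := by
    cases i using Fin.cases with
    | zero =>
      refine hab.mono (sdiff_subset_sdiff_right ?_)
      rintro _ (⟨j, hj, rfl⟩ | ⟨j, hj, rfl⟩)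
      · obtain ⟨k, rfl⟩ := Fin.exists_succ_eq_of_ne_zero hj.ne'
        exact h.range_source ▸ mem_range_self k
      · exact absurd hj (Fin.not_lt_zero j)
    | succ i =>
      refine (h.reachableWithin i).mono ?_
      rw [sdiff_sdiff]
      refine sdiff_subset_sdiff_right ?_
      rintro _ (⟨j, hj, rfl⟩ | ⟨j, hj, rfl⟩)
      · obtain ⟨k, rfl⟩ := Fin.exists_succ_eq_of_ne_zero (Fin.ne_zero_of_lt hj)
        exact .inr (.inl ⟨k, Fin.succ_lt_succ_iff.1 hj, rfl⟩)
      · cases j using Fin.cases with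
        | zero => exact .inl rfl
        | succ k => exact .inr (.inr ⟨k, Fin.succ_lt_succ_iff.1 hj, rfl⟩)

theorem cons_of_erase [DecidableEq V] {S T : Finset V} (ha : a ∈ S) (hb : b ∈ T)
    (hab : ReachableWithin G (R \ S.erase a) a b)
    (h : IsSchedule G (R \ {b}) (S.erase a) (T.erase b) s t) :
    IsSchedule G R S T (Fin.cons a s) (Fin.cons b t) := by
  have hcons := h.cons (S.notMem_erase a) (T.notMem_erase b) hab
  rwa [← Finset.coe_insert, ← Finset.coe_insert, Finset.insert_erase ha,
    Finset.insert_erase hb] at hcons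

end IsSchedule

end Schedule

section Existence

variable {V : Type*} {G : SimpleGraph V} {r : V}

theorem exists_isSchedule {n : ℕ} {S T : Finset V} (hS : S.card = n) (hT : T.card = n)
    (hr : ∀ x ∈ (S ∪ T : Set V), G.Reachable x r) :
    ∃ s t : Fin n → V, IsSchedule G (geodesicRegion G r (S ∪ T)) S T s t := by
  classical
  induction n generalizing S T with
  | zero =>
    obtain rfl := Finset.card_eq_zero.1 hS
    obtain rfl := Finset.card_eq_zero.1 hT
    exact ⟨Fin.elim0, Fin.elim0, Function.injective_of_subsingleton _,
      Function.injective_of_subsingleton _, by simp, by simp, fun i ↦ i.elim0⟩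
  | succ n ih =>
    have nonempty_of_card {A : Finset V} (hA : A.card = n + 1) : A.Nonempty :=
      Finset.card_pos.1 (hA ▸ n.succ_pos)
    obtain ⟨v, hv, hfar⟩ := exists_max_image (S ∪ T : Set V) (G.dist · r) (toFinite _)
      (nonempty_of_card hS).to_set.inl
    wlog hvT : v ∈ T generalizing S T
    · rw [union_comm] at hr hv hfar ⊢
      obtain ⟨s, t, h⟩ := this hT hS hr hv hfar (hv.resolve_left hvT)
      exact ⟨_, _, h.reverse⟩
    obtain ⟨u, hu⟩ := nonempty_of_card hS
    obtain ⟨a, ha : a ∈ S, hav⟩ :=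
      (reachableWithin_geodesicRegion hr (.inl hu) hv).exists_last_mem (Finset.mem_coe.2 hu)
    rw [← Finset.coe_erase] at hav
    have hsub : (S.erase a ∪ T.erase v : Set V) ⊆ S ∪ T :=
      union_subset_union (S.erase_subset a) (T.erase_subset v)
    have hv_notMem : v ∉ (S.erase a ∪ T.erase v : Set V) :=
      fun h ↦ h.elim hav.right_mem.2 (T.notMem_erase v)
    obtain ⟨s, t, h⟩ := ih (S := S.erase a) (T := T.erase v)
      (by rw [Finset.card_erase_of_mem ha, hS, Nat.add_sub_cancel])
      (by rw [Finset.card_erase_of_mem hvT, hT, Nat.add_sub_cancel])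
      fun x hx ↦ hr x (hsub hx)
    have hregion := geodesicRegion_subset_sdiff_singleton hsub hv_notMem hfar
    exact ⟨_, _, (h.mono hregion).cons_of_erase ha hvT hav⟩

end Existence

theorem unlabeled_token_reconfiguration_general
    {V : Type*} (G : SimpleGraph V) (hG : G.Connected)
    (S T : Finset V) (n : ℕ) (hS : S.card = n) (hT : T.card = n) :
    ∃ (s t : Fin n → V),
      Function.Injective s ∧ Function.Injective t ∧
      (∀ v : V, v ∈ S ↔ ∃ i : Fin n, s i = v) ∧
      (∀ v : V, v ∈ T ↔ ∃ i : Fin n, t i = v) ∧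
      ∃ W : (i : Fin n) → G.Walk (s i) (t i),
        ∀ i : Fin n,
          (∀ v ∈ (W i).support, v ≠ s i → ∀ j : Fin n, i < j → v ≠ s j) ∧
          (∀ v ∈ (W i).support, ∀ j : Fin n, j < i → v ≠ t j) := by
  obtain ⟨r⟩ := hG.nonempty
  obtain ⟨s, t, h⟩ := exists_isSchedule hS hT fun x _ ↦ hG.preconnected x r
  choose W hW using h.reachableWithin
  refine ⟨s, t, h.source_injective, h.target_injective, fun v ↦ ?_, fun v ↦ ?_, W, fun i ↦ ⟨?_, ?_⟩⟩
  · rw [← Finset.mem_coe, ← h.range_source, mem_range]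
  · rw [← Finset.mem_coe, ← h.range_target, mem_range]
  · rintro _ hv - j hij rfl
    exact (hW i _ hv).2 (.inl ⟨j, hij, rfl⟩)
  · rintro _ hv j hji rfl
    exact (hW i _ hv).2 (.inr ⟨j, hji, rfl⟩)

/-- Unlabeled token reconfiguration on a finite connected graph: there are
enumerations `s` of `S` and `t` of `T` and walks `W i : s i → t i` such that
walk `i` avoids all still-occupied start vertices `s j` (`j > i`), except at its
first vertex, and avoids all already-filled target vertices `t j` (`j < i`). -/
theorem unlabeled_token_reconfiguration
    {V : Type*} [Fintype V] (G : SimpleGraph V) (hG : G.Connected)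
    (S T : Finset V) (n : ℕ) (hS : S.card = n) (hT : T.card = n) :
    ∃ (s t : Fin n → V),
      Function.Injective s ∧ Function.Injective t ∧
      (∀ v : V, v ∈ S ↔ ∃ i : Fin n, s i = v) ∧
      (∀ v : V, v ∈ T ↔ ∃ i : Fin n, t i = v) ∧
      ∃ W : (i : Fin n) → G.Walk (s i) (t i),
        ∀ i : Fin n,
          (∀ v ∈ (W i).support, v ≠ s i → ∀ j : Fin n, i < j → v ≠ s j) ∧
          (∀ v ∈ (W i).support, ∀ j : Fin n, j < i → v ≠ t j) :=
  unlabeled_token_reconfiguration_general G hG S T n hS hT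
end

section
/- Let p, q ∈ ℤ² with |p₁ − q₁| + |p₂ − q₂| = 1, and let t ∈ [0, 1]. Set x = p + t·(q − p) ∈ ℝ². Then cell(x) ⊆ cell(p) ∪ cell(q), and moreover the interior of cell(x) is disjoint from cell(r) for every r ∈ ℤ² with r ∉ {p, q}. -/
/-- The closed axis-aligned unit square with bottom-left corner `x`. -/
def cell (x : ℝ × ℝ) : Set (ℝ × ℝ) := Set.Icc x.1 (x.1 + 1) ×ˢ Set.Icc x.2 (x.2 + 1)

/-- The canonical embedding of an integer grid point into the plane. -/
def toR2 (p : ℤ × ℤ) : ℝ × ℝ := ((p.1 : ℝ), (p.2 : ℝ))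

/-!
A slide moves only one coordinate, so the containment is the one-dimensional fact that a moving
interval of width `w` stays in the union of its extreme positions as long as these overlap or touch.

The disjointness follows from the containment: a grid cell is the closure of its interior, and that
interior misses all other grid cells, hence misses any set they cover. An open set disjoint from
the interior is disjoint from its closure.
-/

section Containment

theorem Icc_add_subset_union_of_mem_uIcc {α : Type*} [AddCommGroup α] [LinearOrder α]
    [IsOrderedAddMonoid α] {a b w x : α} (hab : |a - b| ≤ w) (hx : x ∈ Set.uIcc a b) :
    Set.Icc x (x + w) ⊆ Set.Icc a (a + w) ∪ Set.Icc b (b + w) := by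
  obtain ⟨ha, hb⟩ := abs_sub_le_iff.mp hab
  rw [Set.Icc_union_Icc' (sub_le_iff_le_add'.mp hb) (sub_le_iff_le_add'.mp ha), max_add_add_right]
  exact Set.Icc_subset_Icc hx.1 (add_le_add_left hx.2 w)

theorem mem_uIcc_prod_uIcc_of_mem_segment {𝕜 : Type*} [Field 𝕜] [LinearOrder 𝕜]
    [IsStrictOrderedRing 𝕜] {p q x : 𝕜 × 𝕜} (hx : x ∈ segment 𝕜 p q) :
    x ∈ Set.uIcc p.1 q.1 ×ˢ Set.uIcc p.2 q.2 := by
  rw [← segment_eq_uIcc, ← segment_eq_uIcc]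
  exact Prod.segment_subset p q hx

variable {p q x : ℝ × ℝ}

theorem cell_subset_union_of_fst_eq (hfst : p.1 = q.1) (hsnd : |p.2 - q.2| ≤ 1)
    (hx : x ∈ segment ℝ p q) : cell x ⊆ cell p ∪ cell q := by
  obtain ⟨hx₁, hx₂⟩ := mem_uIcc_prod_uIcc_of_mem_segment hx
  rw [hfst, Set.uIcc_self, Set.mem_singleton_iff] at hx₁
  simp only [cell, hfst, hx₁, ← Set.prod_union]
  exact Set.prod_mono_right (Icc_add_subset_union_of_mem_uIcc hsnd hx₂)

theorem cell_subset_union_of_snd_eq (hsnd : p.2 = q.2) (hfst : |p.1 - q.1| ≤ 1)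
    (hx : x ∈ segment ℝ p q) : cell x ⊆ cell p ∪ cell q := by
  obtain ⟨hx₁, hx₂⟩ := mem_uIcc_prod_uIcc_of_mem_segment hx
  rw [hsnd, Set.uIcc_self, Set.mem_singleton_iff] at hx₂
  simp only [cell, hsnd, hx₂, ← Set.union_prod]
  exact Set.prod_mono_left (Icc_add_subset_union_of_mem_uIcc hfst hx₁)

end Containment

section Disjointness

theorem interior_cell (x : ℝ × ℝ) :
    interior (cell x) = Set.Ioo x.1 (x.1 + 1) ×ˢ Set.Ioo x.2 (x.2 + 1) := by
  rw [cell, interior_prod_eq, interior_Icc, interior_Icc]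

theorem closure_interior_cell (x : ℝ × ℝ) : closure (interior (cell x)) = cell x := by
  rw [interior_cell, closure_prod_eq, closure_Ioo (lt_add_one x.1).ne,
    closure_Ioo (lt_add_one x.2).ne, cell]

theorem disjoint_interior_cell_toR2 {r s : ℤ × ℤ} (hrs : r ≠ s) :
    Disjoint (interior (cell (toR2 r))) (interior (cell (toR2 s))) := by
  rw [interior_cell, interior_cell, Set.disjoint_prod]
  exact (not_and_or.mp (mt Prod.ext_iff.mpr hrs)).imp
    (fun hfst ↦ Set.pairwise_disjoint_Ioo_intCast ℝ hfst)
    (fun hsnd ↦ Set.pairwise_disjoint_Ioo_intCast ℝ hsnd)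

theorem disjoint_interior_cell_of_subset_biUnion {U : Set (ℝ × ℝ)} {S : Set (ℤ × ℤ)}
    {r : ℤ × ℤ} (hU : U ⊆ ⋃ s ∈ S, cell (toR2 s)) (hr : r ∉ S) :
    Disjoint (interior U) (cell (toR2 r)) := by
  have disjoint_cell (s : ℤ × ℤ) (hs : s ∈ S) :
      Disjoint (interior (cell (toR2 r))) (cell (toR2 s)) := by
    rw [← closure_interior_cell (toR2 s)]
    exact (disjoint_interior_cell_toR2 (ne_of_mem_of_not_mem hs hr).symm).closure_right
      isOpen_interior
  have disjoint_U : Disjoint U (interior (cell (toR2 r))) :=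
    ((Set.disjoint_iUnion₂_right.mpr disjoint_cell).mono_right hU).symm
  rw [← closure_interior_cell (toR2 r)]
  exact (disjoint_U.mono_left interior_subset).closure_right isOpen_interior

end Disjointness

theorem eq_zero_and_abs_eq_one_or_of_abs_add_abs_eq_one {m n : ℤ} (h : |m| + |n| = 1) :
    m = 0 ∧ |n| = 1 ∨ n = 0 ∧ |m| = 1 := by
  grind

theorem cell_subset_union_of_adjacent {p q : ℤ × ℤ} {x : ℝ × ℝ}
    (hadj : |p.1 - q.1| + |p.2 - q.2| = 1) (hx : x ∈ segment ℝ (toR2 p) (toR2 q)) :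
    cell x ⊆ cell (toR2 p) ∪ cell (toR2 q) := by
  rcases eq_zero_and_abs_eq_one_or_of_abs_add_abs_eq_one hadj with ⟨hfst, hsnd⟩ | ⟨hsnd, hfst⟩
  · exact cell_subset_union_of_fst_eq (congrArg Int.cast (sub_eq_zero.mp hfst))
      (by simp only [toR2]; exact_mod_cast hsnd.le) hx
  · exact cell_subset_union_of_snd_eq (congrArg Int.cast (sub_eq_zero.mp hsnd))
      (by simp only [toR2]; exact_mod_cast hfst.le) hx

/-- Sliding a unit square linearly between two grid-adjacent integer positions `p` and `q`
stays inside `cell p ∪ cell q`, and its interior never meets any other grid cell. -/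
theorem slide_between_adjacent_cells
    (p q : ℤ × ℤ) (hadj : |p.1 - q.1| + |p.2 - q.2| = 1)
    (t : ℝ) (ht : t ∈ Set.Icc (0 : ℝ) 1)
    (x : ℝ × ℝ) (hx : x = toR2 p + t • (toR2 q - toR2 p)) :
    cell x ⊆ cell (toR2 p) ∪ cell (toR2 q) ∧
      ∀ r : ℤ × ℤ, r ≠ p → r ≠ q → interior (cell x) ∩ cell (toR2 r) = ∅ := by
  have x_mem_segment : x ∈ segment ℝ (toR2 p) (toR2 q) := by
    rw [segment_eq_image']
    exact ⟨t, ht, hx.symm⟩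
  have subset_union : cell x ⊆ cell (toR2 p) ∪ cell (toR2 q) :=
    cell_subset_union_of_adjacent hadj x_mem_segment
  refine ⟨subset_union, fun r hrp hrq ↦ Set.disjoint_iff_inter_eq_empty.mp ?_⟩
  apply disjoint_interior_cell_of_subset_biUnion (S := {p, q})
  · rwa [Set.biUnion_pair]
  · simp [hrp, hrq]
end

section
/- Let S, T ⊆ ℤ² be finite sets with |S| = |T| = n. Then there exist bijective enumerations s₁, …, sₙ of S and t₁, …, tₙ of T, and continuous maps γᵢ : [0, 1] → ℝ² with γᵢ(0) = sᵢ and γᵢ(1) = tᵢ for each i, such that for every i and every u ∈ [0, 1], the interior of cell(γᵢ(u)) is disjoint from cell(s_j) for all j > i and disjoint from cell(t_j) for all j < i. (Thus n unit squares starting on the cells of S can be moved one at a time, each moving exactly once along a continuous collision-free path, to occupy exactly the cells of T.) -/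
/-!
The analogous statement holds for tokens moving along walks in any connected graph. A finite
connected subgraph contains all sources and targets, so one may induct on the number of vertices.
Choose a vertex `v` whose removal leaves the graph connected. If `v` is a target, take a walk from
some source to `v` and cut it at the last source it visits: the tail carries that token to `v`
without meeting the others, and the remaining tokens are handled in the graph without `v`. If `v` is
a source, reverse time. If it is neither, discard it.

The grid graph is the Hasse diagram of `ℤ × ℤ`. A square sliding between two adjacent grid points
stays at sup-distance at least `1` from every other grid point, and unit squares are balls of radius
`1 / 2` in the sup-metric, so it meets no square it should avoid.
-/

open Function Set

section Graph

open SimpleGraph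

variable {V W : Type*} {G : SimpleGraph V} {H : SimpleGraph W} {S T : Set V}

lemma map_mem_support_map_iff {f : G →g H} (hf : Injective f) {u v x : V} (p : G.Walk u v) :
    f x ∈ (p.map f).support ↔ x ∈ p.support := by
  rw [Walk.support_map, List.mem_map_of_injective hf]

lemma mem_range_of_mem_support_map {f : G →g H} {u v : V} (p : G.Walk u v) {y : W}
    (hy : y ∈ (p.map f).support) : y ∈ range f := by
  rw [Walk.support_map, List.mem_map] at hy
  obtain ⟨x, -, rfl⟩ := hy
  exact mem_range_self x

lemma exists_walk_forall_mem_support_eq_start {u v : V} (p : G.Walk u v)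
    (hp : ∃ x ∈ p.support, x ∈ S) : ∃ a ∈ S, ∃ q : G.Walk a v, ∀ x ∈ q.support, x ∈ S → x = a := by
  induction p with
  | nil =>
    obtain ⟨x, hx, hxS⟩ := hp
    obtain rfl := by simpa using hx
    exact ⟨x, hxS, .nil, by simp⟩
  | @cons u w v huw p ih =>
    by_cases hlater : ∃ x ∈ p.support, x ∈ S
    · exact ih hlater
    · push Not at hlater
      obtain ⟨x, hx, hxS⟩ := hp
      obtain rfl : x = u := by
        rw [Walk.support_cons, List.mem_cons] at hx
        exact hx.resolve_right fun hx ↦ hlater x hx hxS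
      refine ⟨x, hxS, .cons huw p, fun y hy hyS ↦ ?_⟩
      rw [Walk.support_cons, List.mem_cons] at hy
      exact hy.resolve_right fun hy ↦ hlater y hy hyS

/-- The tokens on the vertices `s 0, …, s (n - 1)` can be moved in this order, each along a single
walk, to `t 0, …, t (n - 1)`: the walk of token `i` avoids the tokens that have not moved yet and
those that have already arrived. -/
def IsMonotoneSchedule (G : SimpleGraph V) {n : ℕ} (s t : Fin n → V) : Prop :=
  ∀ i, ∃ p : G.Walk (s i) (t i), (∀ j, i < j → s j ∉ p.support) ∧ ∀ j, j < i → t j ∉ p.support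

/-- Unlabeled tokens occupying the vertex set `S` can be brought to the vertex set `T` by moving
them one at a time, each exactly once. -/
def MonotoneReconfigurable (G : SimpleGraph V) (S T : Set V) : Prop :=
  ∃ (n : ℕ) (s t : Fin n → V), range s = S ∧ range t = T ∧ IsMonotoneSchedule G s t

namespace IsMonotoneSchedule

variable {n : ℕ} {s t : Fin n → V}

lemma rev (h : IsMonotoneSchedule G s t) : IsMonotoneSchedule G (t ∘ Fin.rev) (s ∘ Fin.rev) := by
  intro i
  obtain ⟨p, hsource, htarget⟩ := h i.rev
  refine ⟨p.reverse, fun j hij ↦ ?_, fun j hji ↦ ?_⟩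
  · simpa using htarget j.rev (Fin.rev_lt_rev.2 hij)
  · simpa using hsource j.rev (Fin.rev_lt_rev.2 hji)

lemma injective_source (h : IsMonotoneSchedule G s t) : Injective s :=
  .of_lt_imp_ne fun i j hij heq ↦ by
    obtain ⟨p, hsource, -⟩ := h i
    exact hsource j hij (heq ▸ p.start_mem_support)

lemma injective_target (h : IsMonotoneSchedule G s t) : Injective t :=
  (Injective.of_comp_iff' t Fin.rev_bijective).1 h.rev.injective_source

lemma map (h : IsMonotoneSchedule G s t) {f : G →g H} (hf : Injective f) :
    IsMonotoneSchedule H (f ∘ s) (f ∘ t) := by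
  intro i
  obtain ⟨p, hsource, htarget⟩ := h i
  exact ⟨p.map f, fun j hij ↦ (map_mem_support_map_iff hf p).not.2 (hsource j hij),
    fun j hji ↦ (map_mem_support_map_iff hf p).not.2 (htarget j hji)⟩

lemma cons_map (h : IsMonotoneSchedule G s t) {f : G →g H} (hf : Injective f) {a b : W}
    (hb : b ∉ range f) (p : H.Walk a b) (hp : ∀ i, f (s i) ∉ p.support) :
    IsMonotoneSchedule H (Fin.cons a (f ∘ s) : Fin (n + 1) → W) (Fin.cons b (f ∘ t)) := by
  intro i
  cases i using Fin.cases with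
  | zero => exact ⟨p, fun j ↦ Fin.cases (by simp) (fun j _ ↦ hp j) j, by simp⟩
  | succ i =>
    obtain ⟨q, hsource, htarget⟩ := h i
    refine ⟨q.map f, fun j hij ↦ ?_, fun j hji ↦ ?_⟩
    · cases j using Fin.cases with
      | zero => simp at hij
      | succ j =>
        exact (map_mem_support_map_iff hf q).not.2 (hsource j (Fin.succ_lt_succ_iff.1 hij))
    · cases j using Fin.cases with
      | zero => exact fun hbq ↦ hb (mem_range_of_mem_support_map q hbq)
      | succ j =>
        exact (map_mem_support_map_iff hf q).not.2 (htarget j (Fin.succ_lt_succ_iff.1 hji))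

end IsMonotoneSchedule

namespace MonotoneReconfigurable

lemma empty (G : SimpleGraph V) : MonotoneReconfigurable G ∅ ∅ :=
  ⟨0, Fin.elim0, Fin.elim0, range_eq_empty _, range_eq_empty _, fun i ↦ i.elim0⟩

lemma symm (h : MonotoneReconfigurable G S T) : MonotoneReconfigurable G T S := by
  obtain ⟨n, s, t, rfl, rfl, hst⟩ := h
  exact ⟨n, t ∘ Fin.rev, s ∘ Fin.rev, Fin.rev_surjective.range_comp t,
    Fin.rev_surjective.range_comp s, hst.rev⟩

lemma of_induce {A : Set V} (hS : S ⊆ A) (hT : T ⊆ A)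
    (h : MonotoneReconfigurable (G.induce A) (Subtype.val ⁻¹' S) (Subtype.val ⁻¹' T)) :
    MonotoneReconfigurable G S T := by
  obtain ⟨n, s, t, hs, ht, hst⟩ := h
  refine ⟨n, Subtype.val ∘ s, Subtype.val ∘ t, ?_, ?_,
    hst.map (f := (Embedding.induce A).toHom) Subtype.val_injective⟩
  · rw [range_comp, hs, Subtype.image_preimage_coe, inter_eq_right.2 hS]
  · rw [range_comp, ht, Subtype.image_preimage_coe, inter_eq_right.2 hT]

lemma insert_of_induce {A : Set V} (hS : S ⊆ A) (hT : T ⊆ A)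
    (h : MonotoneReconfigurable (G.induce A) (Subtype.val ⁻¹' S) (Subtype.val ⁻¹' T))
    {a b : V} (hb : b ∉ A) (p : G.Walk a b) (hp : ∀ x ∈ S, x ∉ p.support) :
    MonotoneReconfigurable G (insert a S) (insert b T) := by
  obtain ⟨n, s, t, hs, ht, hst⟩ := h
  have hsS : ∀ i, (s i : V) ∈ S := fun i ↦ hs.subset (mem_range_self i)
  have hbA : b ∉ range (Subtype.val : A → V) := by rwa [Subtype.range_coe]
  refine ⟨n + 1, Fin.cons a (Subtype.val ∘ s), Fin.cons b (Subtype.val ∘ t), ?_, ?_,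
    hst.cons_map (f := (Embedding.induce A).toHom) Subtype.val_injective hbA p
      fun i ↦ hp _ (hsS i)⟩
  · rw [Fin.range_cons, range_comp, hs, Subtype.image_preimage_coe, inter_eq_right.2 hS]
  · rw [Fin.range_cons, range_comp, ht, Subtype.image_preimage_coe, inter_eq_right.2 hT]

lemma exists_isMonotoneSchedule (h : MonotoneReconfigurable G S T) {n : ℕ} (hS : S.encard = n) :
    ∃ s t : Fin n → V, range s = S ∧ range t = T ∧ IsMonotoneSchedule G s t := by
  obtain ⟨m, s, t, rfl, rfl, hst⟩ := h
  obtain rfl : m = n := by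
    simpa [← image_univ, hst.injective_source.encard_image] using hS
  exact ⟨s, t, rfl, rfl, hst⟩

end MonotoneReconfigurable

lemma encard_preimage_val_eq {A : Set V} (hS : S ⊆ A) (hT : T ⊆ A) (hST : S.encard = T.encard) :
    (Subtype.val ⁻¹' S : Set A).encard = (Subtype.val ⁻¹' T : Set A).encard := by
  rw [encard_preimage_of_injective_subset_range Subtype.val_injective (by rwa [Subtype.range_coe]),
    encard_preimage_of_injective_subset_range Subtype.val_injective (by rwa [Subtype.range_coe]),
    hST]

lemma monotoneReconfigurable_of_mem_target (hG : G.Preconnected) {v : V}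
    (hv : ∀ S' T' : Set ({v}ᶜ : Set V), S'.encard = T'.encard →
      MonotoneReconfigurable (G.induce {v}ᶜ) S' T')
    (hST : S.encard = T.encard) (hvT : v ∈ T) : MonotoneReconfigurable G S T := by
  obtain ⟨x, hx⟩ : S.Nonempty := by
    rw [← encard_ne_zero, hST]
    exact encard_ne_zero_of_mem hvT
  obtain ⟨p⟩ := hG x v
  obtain ⟨a, haS, q, hq⟩ :=
    exists_walk_forall_mem_support_eq_start p ⟨x, p.start_mem_support, hx⟩
  have hSv : S \ {a} ⊆ {v}ᶜ := by
    rintro y ⟨hyS, hya⟩ rfl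
    exact hya (hq y q.end_mem_support hyS)
  have hTv : T \ {v} ⊆ {v}ᶜ := fun _ hy ↦ hy.2
  have hcard : (S \ {a}).encard = (T \ {v}).encard := by
    rw [encard_sdiff_singleton_of_mem haS, encard_sdiff_singleton_of_mem hvT, hST]
  have hinsert : MonotoneReconfigurable G (insert a (S \ {a})) (insert v (T \ {v})) :=
    .insert_of_induce hSv hTv (hv _ _ (encard_preimage_val_eq hSv hTv hcard)) (by simp) q
      fun y hy hyq ↦ hy.2 (hq y hyq hy.1)
  rwa [insert_sdiff_self_of_mem haS, insert_sdiff_self_of_mem hvT] at hinsert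

lemma monotoneReconfigurable_of_finite [Finite V] (hG : G.Preconnected)
    (hST : S.encard = T.encard) : MonotoneReconfigurable G S T := by
  induction hV : Nat.card V using Nat.strong_induction_on generalizing V with
  | _ k ih =>
  subst hV
  cases isEmpty_or_nonempty V with
  | inl _ => simpa only [eq_empty_of_isEmpty] using MonotoneReconfigurable.empty G
  | inr _ =>
    obtain ⟨v, hGv⟩ := (Connected.mk hG).exists_preconnected_induce_compl_singleton_of_finite
    have hcard : Nat.card ({v}ᶜ : Set V) < Nat.card V := Finite.card_subtype_lt (x := v) (by simp)
    have hv : ∀ S' T' : Set ({v}ᶜ : Set V), S'.encard = T'.encard →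
        MonotoneReconfigurable (G.induce {v}ᶜ) S' T' := fun _ _ hST' ↦ ih _ hcard hGv hST' rfl
    by_cases hvT : v ∈ T
    · exact monotoneReconfigurable_of_mem_target hG hv hST hvT
    by_cases hvS : v ∈ S
    · exact (monotoneReconfigurable_of_mem_target hG hv hST.symm hvS).symm
    have hSv : S ⊆ {v}ᶜ := subset_compl_singleton_iff.2 hvS
    have hTv : T ⊆ {v}ᶜ := subset_compl_singleton_iff.2 hvT
    exact .of_induce hSv hTv (hv _ _ (encard_preimage_val_eq hSv hTv hST))

theorem monotoneReconfigurable_of_preconnected (hG : G.Preconnected) (hS : S.Finite)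
    (hST : S.encard = T.encard) : MonotoneReconfigurable G S T := by
  classical
  have hT : T.Finite := by rwa [← encard_lt_top_iff, ← hST, encard_lt_top_iff]
  lift S to Finset V using hS
  lift T to Finset V using hT
  obtain hempty | hne := (S ∪ T).eq_empty_or_nonempty
  · obtain ⟨rfl, rfl⟩ := Finset.union_eq_empty.1 hempty
    simpa only [Finset.coe_empty] using MonotoneReconfigurable.empty G
  · obtain ⟨A, hA, hGA⟩ := extend_finset_to_connected hG hne
    have hSA : (S : Set V) ⊆ A := Finset.coe_subset.2 (Finset.union_subset_left hA)
    have hTA : (T : Set V) ⊆ A := Finset.coe_subset.2 (Finset.union_subset_right hA)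
    exact .of_induce hSA hTA
      (monotoneReconfigurable_of_finite hGA.preconnected (encard_preimage_val_eq hSA hTA hST))

end Graph

section Plane

open SimpleGraph (Walk hasse hasse_prod hasse_preconnected_of_succ)

lemma cell_eq_closedBall (x : ℝ × ℝ) :
    cell x = Metric.closedBall (x + (1 / 2, 1 / 2)) (1 / 2) := by
  rw [← Prod.mk.eta (p := x + _), ← closedBall_prod_same, Real.closedBall_eq_Icc,
    Real.closedBall_eq_Icc, cell]
  simp only [Prod.fst_add, Prod.snd_add, add_sub_cancel_right, add_assoc, add_halves]

lemma disjoint_interior_cell_cell {x y : ℝ × ℝ} (h : 1 ≤ dist x y) :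
    Disjoint (interior (cell x)) (cell y) := by
  rw [cell_eq_closedBall, cell_eq_closedBall, interior_closedBall _ (by norm_num)]
  apply Metric.ball_disjoint_closedBall
  rwa [dist_add_right, add_halves]

lemma one_le_dist_intCast {a b m : ℤ} (hm : m ∉ Icc a b) {x : ℝ} (hx : x ∈ Icc (a : ℝ) b) :
    1 ≤ dist x m := by
  rw [Real.dist_eq, le_abs]
  rcases not_and_or.1 hm with hma | hbm
  · have hma' : (m : ℝ) + 1 ≤ a := by exact_mod_cast not_le.1 hma
    left
    linarith [hx.1]
  · have hbm' : (b : ℝ) + 1 ≤ m := by exact_mod_cast not_le.1 hbm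
    right
    linarith [hx.2]

lemma one_le_dist_toR2 {p q m : ℤ × ℤ} (hm : m ∉ Icc p q) {x : ℝ × ℝ}
    (hx : x ∈ Icc (toR2 p) (toR2 q)) : 1 ≤ dist x (toR2 m) := by
  rw [Prod.dist_eq, le_max_iff]
  rw [← Prod.mk.eta (p := p), ← Prod.mk.eta (p := q), Icc_prod_eq, mem_prod, not_and_or] at hm
  exact hm.imp (one_le_dist_intCast · ⟨hx.1.1, hx.2.1⟩) (one_le_dist_intCast · ⟨hx.1.2, hx.2.2⟩)

lemma segment_toR2_subset_Icc {p q : ℤ × ℤ} (hpq : p ≤ q) :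
    segment ℝ (toR2 p) (toR2 q) ⊆ Icc (toR2 p) (toR2 q) :=
  segment_subset_Icc ⟨Int.cast_le.2 hpq.1, Int.cast_le.2 hpq.2⟩

lemma one_le_dist_toR2_of_mem_segment {p q m : ℤ × ℤ} (hpq : (hasse (ℤ × ℤ)).Adj p q)
    (hmp : m ≠ p) (hmq : m ≠ q) {x : ℝ × ℝ} (hx : x ∈ segment ℝ (toR2 p) (toR2 q)) :
    1 ≤ dist x (toR2 m) := by
  rcases hpq with hpq | hqp
  · exact one_le_dist_toR2 (by simp [hpq.Icc_eq, hmp, hmq]) (segment_toR2_subset_Icc hpq.le hx)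
  · rw [segment_symm] at hx
    exact one_le_dist_toR2 (by simp [hqp.Icc_eq, hmp, hmq]) (segment_toR2_subset_Icc hqp.le hx)

lemma joinedIn_toR2_of_walk {u v : ℤ × ℤ} (p : (hasse (ℤ × ℤ)).Walk u v) :
    JoinedIn {x | ∀ m, m ∉ p.support → 1 ≤ dist x (toR2 m)} (toR2 u) (toR2 v) := by
  induction p with
  | @nil u =>
    refine JoinedIn.refl fun m hm ↦ one_le_dist_toR2 (p := u) (q := u) ?_ (by simp)
    simpa using hm
  | @cons u w v huw p ih =>
    refine .trans (.of_segment_subset fun x hx m hm ↦ ?_) (ih.mono fun x hx m hm ↦ hx m ?_)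
    · rw [Walk.support_cons, List.mem_cons, not_or] at hm
      exact one_le_dist_toR2_of_mem_segment huw hm.1
        (fun hmw ↦ hm.2 (hmw ▸ p.start_mem_support)) hx
    · exact fun hmp ↦ hm (List.mem_cons_of_mem u hmp)

lemma hasse_int_prod_int_preconnected : (hasse (ℤ × ℤ)).Preconnected := by
  rw [hasse_prod]
  exact (hasse_preconnected_of_succ ℤ).boxProd (hasse_preconnected_of_succ ℤ)

end Plane

/-- Unlabeled unit squares at integer positions in the (unbounded) plane can always be
monotonically reconfigured: there are enumerations `s` of `S` and `t` of `T` and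
continuous collision-free paths `γ i` from `s i` to `t i`, where path `i` avoids the
still-occupied cells `cell (s j)` for `j > i` and the already-filled target cells
`cell (t j)` for `j < i`. -/
theorem unlabeled_unit_squares_monotone_reconfiguration_unbounded
    (S T : Finset (ℤ × ℤ)) (n : ℕ) (hS : S.card = n) (hT : T.card = n) :
    ∃ (s t : Fin n → ℤ × ℤ),
      Function.Injective s ∧ Function.Injective t ∧
      (∀ v : ℤ × ℤ, v ∈ S ↔ ∃ i : Fin n, s i = v) ∧
      (∀ v : ℤ × ℤ, v ∈ T ↔ ∃ i : Fin n, t i = v) ∧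
      ∃ γ : Fin n → ℝ → ℝ × ℝ,
        ∀ i : Fin n, ContinuousOn (γ i) (Set.Icc 0 1) ∧
          γ i 0 = toR2 (s i) ∧ γ i 1 = toR2 (t i) ∧
          ∀ u ∈ Set.Icc (0 : ℝ) 1,
            (∀ j : Fin n, i < j → interior (cell (γ i u)) ∩ cell (toR2 (s j)) = ∅) ∧
            (∀ j : Fin n, j < i → interior (cell (γ i u)) ∩ cell (toR2 (t j)) = ∅) := by
  have hScard : (S : Set (ℤ × ℤ)).encard = n := by rw [encard_coe_eq_coe_finsetCard, hS]
  have hTcard : (T : Set (ℤ × ℤ)).encard = n := by rw [encard_coe_eq_coe_finsetCard, hT]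
  obtain ⟨s, t, hs, ht, hst⟩ := (monotoneReconfigurable_of_preconnected
    hasse_int_prod_int_preconnected S.finite_toSet
    (hScard.trans hTcard.symm)).exists_isMonotoneSchedule hScard
  refine ⟨s, t, hst.injective_source, hst.injective_target, fun v ↦ (Set.ext_iff.1 hs v).symm,
    fun v ↦ (Set.ext_iff.1 ht v).symm, ?_⟩
  choose p hsource htarget using hst
  have hjoined := fun i ↦ joinedIn_toR2_of_walk (p i)
  refine ⟨fun i ↦ (hjoined i).somePath.extend, fun i ↦
    ⟨(hjoined i).somePath.continuous_extend.continuousOn, by simp, by simp, fun u hu ↦ ?_⟩⟩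
  have hdisjoint : ∀ m ∉ (p i).support,
      interior (cell ((hjoined i).somePath.extend u)) ∩ cell (toR2 m) = ∅ := fun m hm ↦ by
    rw [Path.extend_apply _ hu, ← disjoint_iff_inter_eq_empty]
    exact disjoint_interior_cell_cell ((hjoined i).somePath_mem ⟨u, hu⟩ m hm)
  exact ⟨fun j hij ↦ hdisjoint _ (hsource i j hij), fun j hji ↦ hdisjoint _ (htarget i j hji)⟩
end

section
/- Let C ⊆ ℤ², let D = ⋃_{c ∈ C} cell(c), and let γ : [0, 1] → ℝ² be a continuous map with γ(0) = p ∈ ℤ² and γ(1) = q ∈ ℤ² such that cell(γ(u)) ⊆ D for every u ∈ [0, 1]. Then p and q lie in the same connected component of the grid graph on C; that is, there is a finite sequence p = p₀, p₁, …, p_m = q of points of C with consecutive points at L¹-distance exactly 1. -/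
/-!
Call an integer point `c` close to a position `x` when it is at sup-distance less than `1` from it.
Then `cell x` meets the interior of `cell c`, which no other integer cell meets; so if
`cell x ⊆ ⋃ c ∈ C, cell c`, every integer point close to `x` belongs to `C`. These points form the
vertices of a grid square, edge or vertex, so they all lie in one component of the grid graph on
`C`. Closeness to a fixed integer point is an open condition, so this component is locally constant
in `x`, hence constant on connected sets of positions.
-/

open Set Topology

theorem Icc_inter_Ioo_nonempty_of_abs_sub_lt_one {K : Type*} [Field K] [LinearOrder K]
    [IsStrictOrderedRing K] {a x : K} (h : |a - x| < 1) :
    (Icc x (x + 1) ∩ Ioo a (a + 1)).Nonempty := by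
  obtain ⟨hlower, hupper⟩ := abs_lt.mp h
  exact ⟨(a + x + 1) / 2, ⟨by linarith, by linarith⟩, by linarith, by linarith⟩

section OrderedRing

variable {R : Type*} [Ring R] [LinearOrder R] [IsStrictOrderedRing R]

theorem int_eq_of_mem_Icc_of_mem_Ioo {a b : ℤ} {y : R} (ha : y ∈ Icc (a : R) (a + 1))
    (hb : y ∈ Ioo (b : R) (b + 1)) : a = b := by
  have hab : a < b + 1 := by exact_mod_cast ha.1.trans_lt hb.2
  have hba : b < a + 1 := by exact_mod_cast hb.1.trans_le ha.2
  omega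

theorem int_abs_sub_le_one_of_abs_sub_lt_one {a b : ℤ} {x : R} (ha : |(a : R) - x| < 1)
    (hb : |(b : R) - x| < 1) : |b - a| ≤ 1 := by
  have hlt : |(b : R) - a| < 2 := calc
    |(b : R) - a| ≤ |(b : R) - x| + |x - a| := abs_sub_le _ _ _
    _ = |(b : R) - x| + |(a : R) - x| := by rw [abs_sub_comm x]
    _ < 1 + 1 := add_lt_add hb ha
    _ = 2 := one_add_one_eq_two
  have : |b - a| < 2 := by exact_mod_cast hlt
  omega

end OrderedRing

theorem dist_toR2_lt_one_iff {c : ℤ × ℤ} {x : ℝ × ℝ} :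
    dist (toR2 c) x < 1 ↔ |(c.1 : ℝ) - x.1| < 1 ∧ |(c.2 : ℝ) - x.2| < 1 := by
  simp only [Prod.dist_eq, max_lt_iff, Real.dist_eq, toR2]

theorem dist_toR2_floor_lt_one (x : ℝ × ℝ) : dist (toR2 (⌊x.1⌋, ⌊x.2⌋)) x < 1 := by
  have abs_floor_sub_lt_one (t : ℝ) : |(⌊t⌋ : ℝ) - t| < 1 := by
    rw [abs_sub_comm, Int.self_sub_floor, Int.abs_fract]
    exact Int.fract_lt_one t
  exact dist_toR2_lt_one_iff.mpr ⟨abs_floor_sub_lt_one _, abs_floor_sub_lt_one _⟩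

/-- The grid graph on `C`: its vertices are the points of `C`, and its edges join the points at
L¹-distance exactly `1`. -/
def gridGraph (C : Set (ℤ × ℤ)) : SimpleGraph C where
  Adj a b := |b.1.1 - a.1.1| + |b.1.2 - a.1.2| = 1
  symm := ⟨fun a b h ↦ by rwa [abs_sub_comm a.1.1, abs_sub_comm a.1.2]⟩
  loopless := ⟨fun a h ↦ by simp at h⟩

/-- The configuration space of the moving unit square: the positions of its bottom-left corner for
which the square stays inside the union of the cells of `C`. -/
def freePositions (C : Set (ℤ × ℤ)) : Set (ℝ × ℝ) :=
  {x | cell x ⊆ ⋃ c ∈ C, cell (toR2 c)}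

section FreePositions

variable {C : Set (ℤ × ℤ)}

theorem gridGraph_reachable_of_abs_add_abs_le_one {a b : C}
    (h : |b.1.1 - a.1.1| + |b.1.2 - a.1.2| ≤ 1) : (gridGraph C).Reachable a b := by
  rcases h.eq_or_lt with hadj | hlt
  · exact SimpleGraph.Adj.reachable (G := gridGraph C) hadj
  · have hab : a = b := Subtype.ext (Prod.ext (by grind) (by grind))
    rw [hab]

theorem exists_fin_walk_of_gridGraph_reachable {a b : C} (h : (gridGraph C).Reachable a b) :
    ∃ (m : ℕ) (w : Fin (m + 1) → ℤ × ℤ),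
      w 0 = a ∧ w (Fin.last m) = b ∧
      (∀ i : Fin (m + 1), w i ∈ C) ∧
      (∀ i : Fin m,
        |(w i.succ).1 - (w i.castSucc).1| + |(w i.succ).2 - (w i.castSucc).2| = 1) := by
  obtain ⟨walk⟩ := h
  exact ⟨walk.length, fun i ↦ walk.getVert i, by simp, by simp, fun i ↦ (walk.getVert i).2,
    fun i ↦ walk.adj_getVert_succ i.isLt⟩

theorem mem_of_dist_toR2_lt_one {x : ℝ × ℝ} (hx : x ∈ freePositions C) {c : ℤ × ℤ}
    (hc : dist (toR2 c) x < 1) : c ∈ C := by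
  obtain ⟨hc₁, hc₂⟩ := dist_toR2_lt_one_iff.mp hc
  obtain ⟨y₁, hyx₁, hyc₁⟩ := Icc_inter_Ioo_nonempty_of_abs_sub_lt_one hc₁
  obtain ⟨y₂, hyx₂, hyc₂⟩ := Icc_inter_Ioo_nonempty_of_abs_sub_lt_one hc₂
  have hy : (y₁, y₂) ∈ cell x := ⟨hyx₁, hyx₂⟩
  obtain ⟨d, hdC, hyd₁, hyd₂⟩ := mem_iUnion₂.mp (hx hy)
  have hdc : d = c := Prod.ext (int_eq_of_mem_Icc_of_mem_Ioo hyd₁ hyc₁)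
    (int_eq_of_mem_Icc_of_mem_Ioo hyd₂ hyc₂)
  exact hdc ▸ hdC

theorem mem_of_toR2_mem_freePositions {c : ℤ × ℤ} (hc : toR2 c ∈ freePositions C) : c ∈ C :=
  mem_of_dist_toR2_lt_one hc (by simp)

theorem gridGraph_reachable_of_dist_toR2_lt_one {x : ℝ × ℝ} (hx : x ∈ freePositions C) {a b : C}
    (ha : dist (toR2 a) x < 1) (hb : dist (toR2 b) x < 1) : (gridGraph C).Reachable a b := by
  obtain ⟨ha₁, ha₂⟩ := dist_toR2_lt_one_iff.mp ha
  obtain ⟨hb₁, hb₂⟩ := dist_toR2_lt_one_iff.mp hb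
  let corner : C :=
    ⟨(b.1.1, a.1.2), mem_of_dist_toR2_lt_one hx (dist_toR2_lt_one_iff.mpr ⟨hb₁, ha₂⟩)⟩
  have horizontal : (gridGraph C).Reachable a corner :=
    gridGraph_reachable_of_abs_add_abs_le_one
      (by simpa [corner] using int_abs_sub_le_one_of_abs_sub_lt_one ha₁ hb₁)
  have vertical : (gridGraph C).Reachable corner b :=
    gridGraph_reachable_of_abs_add_abs_le_one
      (by simpa [corner] using int_abs_sub_le_one_of_abs_sub_lt_one ha₂ hb₂)
  exact horizontal.trans vertical

/-- The component of the grid graph on `C` assigned to a free position: the common component of all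
integer points at sup-distance less than `1`, represented by the coordinatewise floor. -/
noncomputable def gridComponent (x : freePositions C) : (gridGraph C).ConnectedComponent :=
  (gridGraph C).connectedComponentMk
    ⟨(⌊x.1.1⌋, ⌊x.1.2⌋), mem_of_dist_toR2_lt_one x.2 (dist_toR2_floor_lt_one x.1)⟩

theorem gridComponent_eq_of_dist_toR2_lt_one {x : freePositions C} {c : C}
    (hc : dist (toR2 c) x < 1) : gridComponent x = (gridGraph C).connectedComponentMk c :=
  SimpleGraph.ConnectedComponent.eq.mpr
    (gridGraph_reachable_of_dist_toR2_lt_one x.2 (dist_toR2_floor_lt_one x.1) hc)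

theorem isLocallyConstant_gridComponent :
    IsLocallyConstant (gridComponent : freePositions C → (gridGraph C).ConnectedComponent) := by
  refine (IsLocallyConstant.iff_eventually_eq _).mpr fun x ↦ ?_
  have floor_close : ∀ᶠ y : freePositions C in 𝓝 x,
      dist (toR2 (⌊x.1.1⌋, ⌊x.1.2⌋)) y < 1 :=
    (continuous_const.dist continuous_subtype_val).continuousAt.eventually_lt_const
      (dist_toR2_floor_lt_one x.1)
  filter_upwards [floor_close] with y hy
  exact gridComponent_eq_of_dist_toR2_lt_one hy

theorem motion_in_domain_gives_grid_walk_general {S : Set (ℝ × ℝ)} (hS : IsPreconnected S)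
    (hSC : S ⊆ freePositions C) {p q : ℤ × ℤ} (hp : toR2 p ∈ S) (hq : toR2 q ∈ S) :
    (gridGraph C).Reachable ⟨p, mem_of_toR2_mem_freePositions (hSC hp)⟩
      ⟨q, mem_of_toR2_mem_freePositions (hSC hq)⟩ := by
  have : PreconnectedSpace S := Subtype.preconnectedSpace hS
  have component_eq : gridComponent ⟨toR2 p, hSC hp⟩ = gridComponent ⟨toR2 q, hSC hq⟩ :=
    (isLocallyConstant_gridComponent.comp_continuous
      (continuous_inclusion hSC)).apply_eq_of_preconnectedSpace ⟨toR2 p, hp⟩ ⟨toR2 q, hq⟩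
  rwa [gridComponent_eq_of_dist_toR2_lt_one (c := ⟨p, _⟩) (by simp),
    gridComponent_eq_of_dist_toR2_lt_one (c := ⟨q, _⟩) (by simp),
    SimpleGraph.ConnectedComponent.eq] at component_eq

end FreePositions

/-- Any continuous motion of a unit square that stays inside `D = ⋃_{c ∈ C} cell c` and
starts and ends at integer positions `p` and `q` connects grid positions in the same
connected component of the grid graph on `C`: there is a walk `p = w 0, …, w m = q`
through points of `C` with consecutive points at L¹-distance exactly 1. -/
theorem motion_in_domain_gives_grid_walk
    (C : Set (ℤ × ℤ)) (D : Set (ℝ × ℝ)) (hD : D = ⋃ c ∈ C, cell (toR2 c))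
    (p q : ℤ × ℤ) (γ : ℝ → ℝ × ℝ) (hγ : ContinuousOn γ (Set.Icc 0 1))
    (h0 : γ 0 = toR2 p) (h1 : γ 1 = toR2 q)
    (hin : ∀ u ∈ Set.Icc (0 : ℝ) 1, cell (γ u) ⊆ D) :
    ∃ (m : ℕ) (w : Fin (m + 1) → ℤ × ℤ),
      w 0 = p ∧ w (Fin.last m) = q ∧
      (∀ i : Fin (m + 1), w i ∈ C) ∧
      (∀ i : Fin m,
        |(w i.succ).1 - (w i.castSucc).1| + |(w i.succ).2 - (w i.castSucc).2| = 1) := by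
  subst hD
  exact exists_fin_walk_of_gridGraph_reachable <| motion_in_domain_gives_grid_walk_general
    (isPreconnected_Icc.image γ hγ) (image_subset_iff.mpr hin) ⟨0, by simp, h0⟩ ⟨1, by simp, h1⟩
end

section
/- Let V be a finite type and f : V → V → ℕ. Then there exists g : V → V → ℕ with g(u, v) ≤ f(u, v) for all u, v ∈ V, with excess_g(v) = excess_f(v) for every v ∈ V, and such that the support of g is acyclic: there is no sequence v₀, v₁, …, v_m with m ≥ 1, v_m = v₀, and g(vᵢ, v_{i+1}) > 0 for all 0 ≤ i < m. -/
/-- The total outflow of vertex `v` under the flow `f`. -/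
def flowOut {V : Type*} [Fintype V] (f : V → V → ℕ) (v : V) : ℕ := ∑ u, f v u

/-- The total inflow of vertex `v` under the flow `f`. -/
def flowIn {V : Type*} [Fintype V] (f : V → V → ℕ) (v : V) : ℕ := ∑ u, f u v

/-- The excess (outflow minus inflow, in `ℤ`) of vertex `v` under the flow `f`. -/
def excess {V : Type*} [Fintype V] (f : V → V → ℕ) (v : V) : ℤ :=
  (flowOut f v : ℤ) - (flowIn f v : ℤ)

/-! Among the flows below `f` with the excesses of `f`, choose a pointwise minimal one; it exists
because `V → V → ℕ` is well-founded for finite `V`. If its support contained a closed walk, a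
shortest one would repeat no vertex, so it would use every edge at most once, and one unit could be
subtracted along it. A closed walk leaves every vertex as often as it enters it, so this would not
change the excesses and would contradict minimality. -/

open Finset

section ClosedWalk

variable {V : Type*} {r : V → V → Prop} {m : ℕ} {v : Fin (m + 1) → V}

/-- The sequence `v 0, …, v m` is a directed closed walk of positive length `m` along the relation
`r`. Vertices may repeat. It is a plain conjunction so that its instance for the support of a flow
unfolds to the cycles excluded by `exists_acyclic_subflow_with_same_excess`. -/
def IsClosedWalk (r : V → V → Prop) (v : Fin (m + 1) → V) : Prop :=
  1 ≤ m ∧ v (Fin.last m) = v 0 ∧ ∀ i : Fin m, r (v i.castSucc) (v i.succ)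

theorem exists_isClosedWalk_of_repeated_vertex (hr : ∀ i : Fin m, r (v i.castSucc) (v i.succ))
    {i j : Fin m} (hij : i < j) (hv : v i.castSucc = v j.castSucc) :
    ∃ w : Fin ((j : ℕ) - i + 1) → V, IsClosedWalk r w := by
  have hij' : (i : ℕ) < j := hij
  refine ⟨fun k ↦ v ⟨i + k, by omega⟩, by omega, ?_, fun k ↦ hr ⟨i + k, by omega⟩⟩
  have hlast : (⟨i + (j - i), by omega⟩ : Fin (m + 1)) = j.castSucc :=
    Fin.ext (Nat.add_sub_of_le hij'.le)
  exact (congrArg v hlast).trans hv.symm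

theorem exists_isClosedWalk_injective_init (h : ∃ (m : ℕ) (v : Fin (m + 1) → V), IsClosedWalk r v) :
    ∃ (m : ℕ) (v : Fin (m + 1) → V), IsClosedWalk r v ∧ Function.Injective (Fin.init v) := by
  classical
  obtain ⟨v, hv⟩ := Nat.find_spec h
  refine ⟨Nat.find h, v, hv, Function.Injective.of_lt_imp_ne fun i j hij heq ↦ ?_⟩
  exact Nat.find_min h (by omega) (exists_isClosedWalk_of_repeated_vertex hv.2.2 hij heq)

end ClosedWalk

section WalkFlow

variable {V : Type*} [DecidableEq V] {m : ℕ} {v : Fin (m + 1) → V}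

/-- The flow sending one unit along the sequence `v 0, …, v m`: its value at `(u, w)` is the number
of steps of the sequence from `u` to `w`. -/
def walkFlow (v : Fin (m + 1) → V) (u w : V) : ℕ :=
  #{i : Fin m | v i.castSucc = u ∧ v i.succ = w}

theorem walkFlow_castSucc_succ_pos (v : Fin (m + 1) → V) (i : Fin m) :
    0 < walkFlow v (v i.castSucc) (v i.succ) :=
  card_pos.mpr ⟨i, by simp⟩

theorem walkFlow_le_one (hv : Function.Injective (Fin.init v)) (u w : V) : walkFlow v u w ≤ 1 := by
  refine card_le_one.mpr fun i hi j hj ↦ hv ?_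
  exact (mem_filter.mp hi).2.1.trans (mem_filter.mp hj).2.1.symm

theorem walkFlow_le {f : V → V → ℕ} (hv : Function.Injective (Fin.init v))
    (hf : ∀ i : Fin m, 0 < f (v i.castSucc) (v i.succ)) : walkFlow v ≤ f := by
  intro u w
  rcases (walkFlow v u w).eq_zero_or_pos with hzero | hpos
  · exact hzero ▸ Nat.zero_le _
  · obtain ⟨i, hi⟩ := card_pos.mp hpos
    obtain ⟨rfl, rfl⟩ := (mem_filter.mp hi).2
    exact (walkFlow_le_one hv _ _).trans (hf i)

variable [Fintype V]

theorem flowOut_walkFlow (v : Fin (m + 1) → V) (u : V) :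
    flowOut (walkFlow v) u = #{i : Fin m | v i.castSucc = u} := by
  simp only [flowOut, walkFlow, ← filter_filter]
  exact (card_eq_sum_card_fiberwise fun _ _ ↦ mem_univ _).symm

theorem flowIn_walkFlow (v : Fin (m + 1) → V) (w : V) :
    flowIn (walkFlow v) w = #{i : Fin m | v i.succ = w} := by
  simp only [flowIn, walkFlow, and_comm (b := _ = w), ← filter_filter]
  exact (card_eq_sum_card_fiberwise fun _ _ ↦ mem_univ _).symm

theorem excess_walkFlow (v : Fin (m + 1) → V) (u : V) :
    excess (walkFlow v) u = (if v 0 = u then 1 else 0) - (if v (Fin.last m) = u then 1 else 0) := by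
  have hcount := (Fin.sum_univ_castSucc fun i ↦ if v i = u then (1 : ℤ) else 0).symm.trans
    (Fin.sum_univ_succ fun i ↦ if v i = u then (1 : ℤ) else 0)
  simp only [excess, flowOut_walkFlow, flowIn_walkFlow, card_filter, Nat.cast_sum, Nat.cast_ite,
    Nat.cast_one, Nat.cast_zero]
  linarith

end WalkFlow

section Excess

variable {V : Type*} [Fintype V]

theorem excess_add (f g : V → V → ℕ) : excess (f + g) = excess f + excess g := by
  ext v
  simp only [excess, flowOut, flowIn, Pi.add_apply, sum_add_distrib, Nat.cast_add]
  ring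

theorem excess_sub {f g : V → V → ℕ} (hgf : g ≤ f) : excess (f - g) = excess f - excess g := by
  rw [eq_sub_iff_add_eq, ← excess_add, tsub_add_cancel_of_le hgf]

theorem not_exists_isClosedWalk_of_minimal_excess {e : V → ℤ} {g : V → V → ℕ}
    (hg : Minimal (fun f ↦ excess f = e) g) :
    ¬ ∃ (m : ℕ) (v : Fin (m + 1) → V), IsClosedWalk (fun u w ↦ 0 < g u w) v := by
  classical
  intro hwalk
  obtain ⟨m, v, ⟨hm, hclosed, hpos⟩, hinj⟩ := exists_isClosedWalk_injective_init hwalk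
  have hle : walkFlow v ≤ g := walkFlow_le hinj hpos
  have hbalanced : excess (walkFlow v) = 0 := by
    ext u
    rw [excess_walkFlow, hclosed, sub_self, Pi.zero_apply]
  have hexcess : excess (g - walkFlow v) = e := by
    rw [excess_sub hle, hbalanced, sub_zero, hg.prop]
  let i : Fin m := ⟨0, hm⟩
  have hdecrease : (g - walkFlow v) (v i.castSucc) (v i.succ) < g (v i.castSucc) (v i.succ) :=
    Nat.sub_lt (hpos i) (walkFlow_castSucc_succ_pos v i)
  exact hdecrease.not_ge (hg.le_of_le hexcess tsub_le_self _ _)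

end Excess

/-- Cycle removal: every nonnegative integer flow `f` can be replaced by a pointwise
smaller flow `g` with the same excess at every vertex whose support contains no directed
cycle. -/
theorem exists_acyclic_subflow_with_same_excess
    {V : Type*} [Fintype V] (f : V → V → ℕ) :
    ∃ g : V → V → ℕ,
      (∀ u v : V, g u v ≤ f u v) ∧
      (∀ v : V, excess g v = excess f v) ∧
      ¬ ∃ (m : ℕ) (v : Fin (m + 1) → V), 1 ≤ m ∧ v (Fin.last m) = v 0 ∧
        ∀ i : Fin m, 0 < g (v i.castSucc) (v i.succ) := by
  obtain ⟨g, hgf, hmin⟩ :=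
    exists_minimal_le_of_wellFoundedLT (fun g : V → V → ℕ ↦ excess g = excess f) f rfl
  exact ⟨g, hgf, congrFun hmin.prop, not_exists_isClosedWalk_of_minimal_excess hmin⟩
end

section
/- Let V be a finite type and f : V → V → ℕ whose support is acyclic (there is no sequence v₀, …, v_m with m ≥ 1, v_m = v₀, and f(vᵢ, v_{i+1}) > 0 for all 0 ≤ i < m). Let t ∈ V satisfy in_f(t) > out_f(t). Then there exists a vertex s ∈ V with out_f(s) > in_f(s), together with a directed path s = v₀, v₁, …, v_m = t (m ≥ 1) with f(vᵢ, v_{i+1}) > 0 for all 0 ≤ i < m. -/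
/-!
The set `S` of vertices from which `t` can be reached along the support of `f` receives no flow
from outside, so the total inflow over `S` is at most the total outflow. As `t ∈ S` has an excess
of inflow, some other vertex of `S` has an excess of outflow.
-/

theorem exists_relSeries_of_transGen {α : Type*} {r : SetRel α α} {a b : α}
    (h : Relation.TransGen (fun x y ↦ (x, y) ∈ r) a b) :
    ∃ p : RelSeries r, 1 ≤ p.length ∧ p.head = a ∧ p.last = b := by
  induction h with
  | @single b hab =>
    exact ⟨(RelSeries.singleton r a).snoc b (by simpa using hab), by simp, by simp, by simp⟩
  | @tail b c _ hbc ih =>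
    obtain ⟨p, -, hhead, rfl⟩ := ih
    exact ⟨p.snoc c hbc, by simp, by simpa using hhead, by simp⟩

section Flow

variable {V M : Type*} [Fintype V] [AddCommMonoid M]

theorem sum_inflow_le_sum_outflow_of_forall_pred_mem [PartialOrder M] [IsOrderedAddMonoid M]
    {f : V → V → M} (hf : ∀ u v, 0 ≤ f u v) {S : Finset V}
    (hS : ∀ u, ∀ v ∈ S, 0 < f u v → u ∈ S) :
    ∑ v ∈ S, ∑ u, f u v ≤ ∑ v ∈ S, ∑ u, f v u := by
  have eq_zero_of_notMem (v) (hv : v ∈ S) (u) (hu : u ∉ S) : f u v = 0 :=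
    ((hf u v).eq_of_not_lt fun hpos ↦ hu (hS u v hv hpos)).symm
  calc ∑ v ∈ S, ∑ u, f u v
      = ∑ v ∈ S, ∑ u ∈ S, f u v := Finset.sum_congr rfl fun v hv ↦
        (Finset.sum_subset S.subset_univ fun u _ hu ↦ eq_zero_of_notMem v hv u hu).symm
    _ = ∑ v ∈ S, ∑ u ∈ S, f v u := Finset.sum_comm
    _ ≤ ∑ v ∈ S, ∑ u, f v u := Finset.sum_le_sum fun v _ ↦
        Finset.sum_le_sum_of_subset_of_nonneg S.subset_univ fun u _ _ ↦ hf v u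

variable [LinearOrder M] [IsOrderedCancelAddMonoid M] {f : V → V → M} {t : V}

theorem exists_mem_inflow_lt_outflow_of_forall_pred_mem (hf : ∀ u v, 0 ≤ f u v) {S : Finset V}
    (hS : ∀ u, ∀ v ∈ S, 0 < f u v → u ∈ S) (htS : t ∈ S) (ht : ∑ u, f t u < ∑ u, f u t) :
    ∃ s ∈ S, ∑ u, f u s < ∑ u, f s u := by
  by_contra! outflow_le_inflow
  exact (Finset.sum_lt_sum outflow_le_inflow ⟨t, htS, ht⟩).not_ge
    (sum_inflow_le_sum_outflow_of_forall_pred_mem hf hS)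

theorem exists_inflow_lt_outflow_and_transGen (hf : ∀ u v, 0 ≤ f u v)
    (ht : ∑ u, f t u < ∑ u, f u t) :
    ∃ s, ∑ u, f u s < ∑ u, f s u ∧ Relation.TransGen (fun u v ↦ 0 < f u v) s t := by
  classical
  let ancestors : Finset V := {u | Relation.ReflTransGen (fun u v ↦ 0 < f u v) u t}
  have mem_ancestors (u) :
      u ∈ ancestors ↔ Relation.ReflTransGen (fun u v ↦ 0 < f u v) u t := by
    simp [ancestors]
  have pred_mem (u) (v) (hv : v ∈ ancestors) (huv : 0 < f u v) : u ∈ ancestors :=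
    (mem_ancestors u).2 (((mem_ancestors v).1 hv).head huv)
  obtain ⟨s, hs_mem, hs⟩ :=
    exists_mem_inflow_lt_outflow_of_forall_pred_mem hf pred_mem ((mem_ancestors t).2 .refl) ht
  have ne_source : t ≠ s := by
    rintro rfl
    exact lt_asymm hs ht
  have hreach := Relation.reflTransGen_iff_eq_or_transGen.1 ((mem_ancestors s).1 hs_mem)
  exact ⟨s, hs, hreach.resolve_left ne_source⟩

theorem acyclic_flow_exists_source_path_general (hf : ∀ u v, 0 ≤ f u v)
    (ht : ∑ u, f t u < ∑ u, f u t) :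
    ∃ s, ∑ u, f u s < ∑ u, f s u ∧
      ∃ (m : ℕ) (v : Fin (m + 1) → V), 1 ≤ m ∧ v 0 = s ∧ v (Fin.last m) = t ∧
        ∀ i : Fin m, 0 < f (v i.castSucc) (v i.succ) := by
  obtain ⟨s, hs, hreach⟩ := exists_inflow_lt_outflow_and_transGen hf ht
  obtain ⟨p, hlength, hhead, hlast⟩ :=
    exists_relSeries_of_transGen (r := {e : V × V | 0 < f e.1 e.2}) hreach
  exact ⟨s, hs, p.length, p, hlength, hhead, hlast, p.step⟩

end Flow

/-- In an acyclic flow `f`, every vertex `t` with strictly larger inflow than outflow is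
reached by a flow-carrying directed path from some vertex `s` with strictly larger outflow
than inflow. -/
theorem acyclic_flow_exists_source_path
    {V : Type*} [Fintype V] (f : V → V → ℕ)
    (hacyclic : ¬ ∃ (m : ℕ) (v : Fin (m + 1) → V), 1 ≤ m ∧ v (Fin.last m) = v 0 ∧
      ∀ i : Fin m, 0 < f (v i.castSucc) (v i.succ))
    (t : V) (ht : flowOut f t < flowIn f t) :
    ∃ (s : V), flowIn f s < flowOut f s ∧
      ∃ (m : ℕ) (v : Fin (m + 1) → V), 1 ≤ m ∧ v 0 = s ∧ v (Fin.last m) = t ∧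
        ∀ i : Fin m, 0 < f (v i.castSucc) (v i.succ) :=
  acyclic_flow_exists_source_path_general (fun _ _ ↦ Nat.zero_le _) ht
end
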